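/- The group SL(2, F_8) admits a faithful complex linear representation of dimension 7. -/

import Mathlib

/-!
The Weil representation of `SL(2, F)` acts on the complex functions on a finite quadratic space. In
general it is only projective, but if the Gauss sum of the form does not change when the form is
scaled, dividing the kernels by that Gauss sum gives a genuine action. For the norm form of a
quadratic extension `E / F` of finite fields, `q = |F|`, this holds because the norm is surjective.
The elements of norm one act on `E` by isometries, hence commute with `SL(2, F)`, and the functions
on which they act through an injective character `θ` of `Eˣ` form an invariant subspace of
dimension `q - 1`, one for each nonzero value of the norm.

It is faithful for `q > 2`. A matrix with lower-left entry zero that fixes `θ` is the identity. One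
with nonzero lower-left entry cannot fix the restriction of `θ` to the `q + 1` elements of norm
one: that would make the Gauss sum, of absolute value `q`, equal to a twisted sum `S` over these
elements, and Cauchy-Schwarz gives `2 * ‖S‖ ^ 2 ≤ (q + 1) ^ 2 < 2 * q ^ 2`.
-/

open Module QuadraticMap Matrix.SpecialLinearGroup

open scoped MatrixGroups

noncomputable section

section QuadraticGaussSum

variable {F V : Type*} [Field F] [AddCommGroup V] [Module F V] [Fintype V]

/-- The Gauss sum `∑ v, ψ (Q v)` of a quadratic form, the normalising constant of the Weil
representation. -/
def quadraticGaussSum (ψ : AddChar F ℂ) (Q : QuadraticForm F V) : ℂ := ∑ v, ψ (Q v)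

variable {ψ : AddChar F ℂ} {Q : QuadraticForm F V}

lemma sum_addChar_polar_eq_ite [DecidableEq V] (hψ : ψ ≠ 1) (hQ : Q.polarBilin.SeparatingLeft)
    (v : V) : ∑ w, ψ (polar Q v w) = if v = 0 then (Fintype.card V : ℂ) else 0 := by
  classical
  let χ : AddChar V ℂ := ψ.compAddMonoidHom (Q.polarBilin v).toAddMonoidHom
  have hχ : χ = 0 ↔ v = 0 := by
    refine ⟨fun h ↦ by_contra fun hv ↦ hψ ?_, fun h ↦ by ext; simp [χ, h]⟩
    obtain ⟨w, hw⟩ : ∃ w, polar Q v w ≠ 0 := by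
      contrapose! hv
      exact hQ v hv
    ext t
    simpa [χ, hw] using DFunLike.congr_fun h ((t / polar Q v w) • w)
  exact χ.sum_eq_ite.trans (if_congr hχ rfl rfl)

lemma sum_addChar_sub_polar {e : F} (he : e ≠ 0) (v : V) :
    ∑ z, ψ (e * Q z - polar Q z v) = ψ (-(Q v / e)) * quadraticGaussSum ψ (e • Q) := by
  rw [quadraticGaussSum, Finset.mul_sum, ← Equiv.sum_comp (Equiv.addRight (e⁻¹ • v))]
  refine Finset.sum_congr rfl fun z _ ↦ ?_
  rw [← AddChar.map_add_eq_mul]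
  congr 1
  simp only [Equiv.coe_addRight, QuadraticMap.map_add Q, QuadraticMap.map_smul, smul_eq_mul,
    polar_add_left, polar_smul_left, polar_smul_right, polar_self, smul_apply,
    nsmul_eq_mul, Nat.cast_ofNat]
  field

lemma quadraticGaussSum_mul_quadraticGaussSum_neg (hψ : ψ ≠ 1)
    (hQ : Q.polarBilin.SeparatingLeft) :
    quadraticGaussSum ψ Q * quadraticGaussSum ψ (-Q) = Fintype.card V := by
  classical
  calc quadraticGaussSum ψ Q * quadraticGaussSum ψ (-Q)
      = ∑ w, ∑ v, ψ (Q (v + w)) * ψ (-Q w) := by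
        simp only [quadraticGaussSum, Finset.mul_sum, Finset.sum_mul]
        exact Finset.sum_congr rfl fun w _ ↦
          (Equiv.sum_comp (Equiv.addRight w) fun v ↦ ψ (Q v) * ψ (-Q w)).symm
    _ = ∑ v, ψ (Q v) * ∑ w, ψ (polar Q v w) := by
        rw [Finset.sum_comm]
        refine Finset.sum_congr rfl fun v _ ↦ ?_
        rw [Finset.mul_sum]
        refine Finset.sum_congr rfl fun w _ ↦ ?_
        rw [← AddChar.map_add_eq_mul, ← AddChar.map_add_eq_mul, QuadraticMap.map_add Q]
        congr 1
        ring
    _ = Fintype.card V := by simp [sum_addChar_polar_eq_ite hψ hQ]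

lemma quadraticGaussSum_sq (hψ : ψ ≠ 1) (hQ : Q.polarBilin.SeparatingLeft)
    (hγ : ∀ e : F, e ≠ 0 → quadraticGaussSum ψ (e • Q) = quadraticGaussSum ψ Q) :
    quadraticGaussSum ψ Q ^ 2 = Fintype.card V := by
  have hneg : quadraticGaussSum ψ (-Q) = quadraticGaussSum ψ Q := by
    rw [← neg_one_smul F Q, hγ _ (neg_ne_zero.mpr one_ne_zero)]
  rw [← quadraticGaussSum_mul_quadraticGaussSum_neg hψ hQ, hneg, pow_two]

end QuadraticGaussSum

lemma det_fin_two_eq_one {R : Type*} [CommRing R] (g : SL(2, R)) :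
    g 0 0 * g 1 1 - g 0 1 * g 1 0 = 1 :=
  (Matrix.det_fin_two g.1).symm.trans g.det_coe

section WeilRepresentation

variable {F V : Type*} [Field F] [AddCommGroup V] [Module F V]
  (ψ : AddChar F ℂ) (Q : QuadraticForm F V)

/-- The phase `(a Q x + d Q y - polar Q x y) / c` of the kernel of the Weil operator of the matrix
`!![a, b; c, d]`; it is only used for `c ≠ 0`. -/
def weilPhase (g : SL(2, F)) (x y : V) : F :=
  (g 0 0 * Q x + g 1 1 * Q y - polar Q x y) / g 1 0

variable {Q} in
lemma weilPhase_add_weilPhase {g h : SL(2, F)} (hg : g 1 0 ≠ 0) (hh : h 1 0 ≠ 0) (x y z : V) :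
    weilPhase Q g x z + weilPhase Q h z y =
      (g 0 0 / g 1 0 * Q x + h 1 1 / h 1 0 * Q y) +
        ((g * h) 1 0 / (g 1 0 * h 1 0) * Q z -
          polar Q z ((g 1 0)⁻¹ • x + (h 1 0)⁻¹ • y)) := by
  simp only [weilPhase, coe_mul, Matrix.mul_apply, Fin.sum_univ_two, polar_add_right,
    polar_smul_right, polar_comm Q x z, smul_eq_mul]
  field

variable [Fintype V]

open scoped Classical in
/-- The action of `!![a, b; c, d]` on functions `V → ℂ` in the Weil representation attached to `Q`
and `ψ`: multiplication by `ψ (a b Q x)` after dilation by `a` when `c = 0`, and the integral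
operator with kernel `ψ (weilPhase Q g x y)` when `c ≠ 0`. Dividing the kernel by the Gauss sum of
`Q` itself, and not by its absolute value, is what removes the projective cocycle. -/
def weilOperator (g : SL(2, F)) : Module.End ℂ (V → ℂ) where
  toFun f x :=
    if g 1 0 = 0 then ψ (g 0 0 * g 0 1 * Q x) * f (g 0 0 • x)
    else (quadraticGaussSum ψ Q)⁻¹ * ∑ y, ψ (weilPhase Q g x y) * f y
  map_add' f₁ f₂ := by
    ext x
    split_ifs <;> simp [*, mul_add, Finset.sum_add_distrib]
  map_smul' r f := by
    ext x
    split_ifs <;> simp [*, mul_left_comm, Finset.mul_sum]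

variable {ψ Q}

lemma weilOperator_apply_of_eq_zero {g : SL(2, F)} (hg : g 1 0 = 0) (f : V → ℂ) (x : V) :
    weilOperator ψ Q g f x = ψ (g 0 0 * g 0 1 * Q x) * f (g 0 0 • x) := if_pos hg

lemma weilOperator_apply_of_ne_zero {g : SL(2, F)} (hg : g 1 0 ≠ 0) (f : V → ℂ) (x : V) :
    weilOperator ψ Q g f x =
      (quadraticGaussSum ψ Q)⁻¹ * ∑ y, ψ (weilPhase Q g x y) * f y := if_neg hg

lemma weilOperator_one : weilOperator ψ Q 1 = 1 := by
  refine LinearMap.ext fun f ↦ funext fun x ↦ ?_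
  simp [weilOperator_apply_of_eq_zero]

lemma weilOperator_mul_of_left_eq_zero {g h : SL(2, F)} (hg : g 1 0 = 0) :
    weilOperator ψ Q (g * h) = weilOperator ψ Q g * weilOperator ψ Q h := by
  have hdet : g 0 0 * g 1 1 = 1 := by simpa [hg] using det_fin_two_eq_one g
  have ha : g 0 0 ≠ 0 := left_ne_zero_of_mul_eq_one hdet
  have hd : g 1 1 = (g 0 0)⁻¹ := eq_inv_of_mul_eq_one_right hdet
  refine LinearMap.ext fun f ↦ funext fun x ↦ ?_
  by_cases hh : h 1 0 = 0
  · have hgh : (g * h) 1 0 = 0 := by simp [Matrix.mul_apply, Fin.sum_univ_two, hg, hh]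
    have hdet' : h 0 0 * h 1 1 = 1 := by simpa [hh] using det_fin_two_eq_one h
    rw [Module.End.mul_apply, weilOperator_apply_of_eq_zero hg, weilOperator_apply_of_eq_zero hh,
      weilOperator_apply_of_eq_zero hgh, ← mul_assoc, ← AddChar.map_add_eq_mul, smul_smul]
    simp only [coe_mul, Matrix.mul_apply, Fin.sum_univ_two, hh, mul_zero, add_zero,
      QuadraticMap.map_smul, smul_eq_mul]
    congr 2
    · linear_combination g 0 0 * g 0 1 * Q x * hdet'
    · rw [mul_comm]
  · have hgh : (g * h) 1 0 ≠ 0 := by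
      simp [Matrix.mul_apply, Fin.sum_univ_two, hg, hh, right_ne_zero_of_mul_eq_one hdet]
    rw [Module.End.mul_apply, weilOperator_apply_of_eq_zero hg, weilOperator_apply_of_ne_zero hh,
      weilOperator_apply_of_ne_zero hgh, mul_left_comm]
    congr 1
    rw [Finset.mul_sum]
    refine Finset.sum_congr rfl fun y _ ↦ ?_
    rw [← mul_assoc, ← AddChar.map_add_eq_mul]
    congr 2
    simp only [weilPhase, coe_mul, Matrix.mul_apply, Fin.sum_univ_two, hg, hd,
      QuadraticMap.map_smul, polar_smul_left, smul_eq_mul, zero_mul, zero_add]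
    field

lemma weilOperator_mul_of_right_eq_zero {g h : SL(2, F)} (hg : g 1 0 ≠ 0) (hh : h 1 0 = 0) :
    weilOperator ψ Q (g * h) = weilOperator ψ Q g * weilOperator ψ Q h := by
  have hdet : h 0 0 * h 1 1 = 1 := by simpa [hh] using det_fin_two_eq_one h
  have ha : h 0 0 ≠ 0 := left_ne_zero_of_mul_eq_one hdet
  have hd : h 1 1 = (h 0 0)⁻¹ := eq_inv_of_mul_eq_one_right hdet
  have hgh : (g * h) 1 0 ≠ 0 := by simp [Matrix.mul_apply, Fin.sum_univ_two, hg, hh, ha]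
  refine LinearMap.ext fun f ↦ funext fun x ↦ ?_
  simp only [Module.End.mul_apply, weilOperator_apply_of_ne_zero hg,
    weilOperator_apply_of_ne_zero hgh, weilOperator_apply_of_eq_zero hh]
  congr 1
  rw [← Equiv.sum_comp (LinearEquiv.smulOfNeZero F V _ ha).toEquiv]
  refine Finset.sum_congr rfl fun y _ ↦ ?_
  rw [← mul_assoc, ← AddChar.map_add_eq_mul]
  congr 2
  simp only [LinearEquiv.coe_toEquiv, LinearEquiv.smulOfNeZero_apply, weilPhase, coe_mul,
    Matrix.mul_apply, Fin.sum_univ_two, hh, hd, QuadraticMap.map_smul, polar_smul_right,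
    smul_eq_mul]
  field

lemma weilOperator_mul_apply_of_ne_zero {g h : SL(2, F)} (hg : g 1 0 ≠ 0) (hh : h 1 0 ≠ 0)
    (f : V → ℂ) (x : V) :
    (weilOperator ψ Q g * weilOperator ψ Q h) f x =
      (quadraticGaussSum ψ Q ^ 2)⁻¹ * ∑ y,
        (ψ (g 0 0 / g 1 0 * Q x + h 1 1 / h 1 0 * Q y) *
        ∑ z, ψ ((g * h) 1 0 / (g 1 0 * h 1 0) * Q z -
          polar Q z ((g 1 0)⁻¹ • x + (h 1 0)⁻¹ • y))) * f y := by
  simp only [Module.End.mul_apply, weilOperator_apply_of_ne_zero hg,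
    weilOperator_apply_of_ne_zero hh, Finset.mul_sum, Finset.sum_mul]
  rw [Finset.sum_comm]
  refine Finset.sum_congr rfl fun y _ ↦ Finset.sum_congr rfl fun z _ ↦ ?_
  rw [← AddChar.map_add_eq_mul, ← weilPhase_add_weilPhase hg hh, AddChar.map_add_eq_mul]
  ring

lemma weilOperator_mul_of_mul_eq_zero (hψ : ψ ≠ 1) (hQ : Q.polarBilin.SeparatingLeft)
    (hγ : quadraticGaussSum ψ Q ^ 2 = Fintype.card V) {g h : SL(2, F)} (hg : g 1 0 ≠ 0)
    (hh : h 1 0 ≠ 0) (hgh : (g * h) 1 0 = 0) :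
    weilOperator ψ Q (g * h) = weilOperator ψ Q g * weilOperator ψ Q h := by
  classical
  set a := (g * h) 0 0 with ha
  have hc : g 1 0 * a = -h 1 0 := by
    have hdet := det_fin_two_eq_one g
    simp only [ha, coe_mul, Matrix.mul_apply, Fin.sum_univ_two] at hgh ⊢
    linear_combination g 0 0 * hgh - h 1 0 * hdet
  have hpole (x y : V) : (g 1 0)⁻¹ • x + (h 1 0)⁻¹ • y = 0 ↔ y = a • x := by
    have : (g 1 0)⁻¹ • x + (h 1 0)⁻¹ • y = (h 1 0)⁻¹ • (y - a • x) := by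
      rw [smul_sub, smul_smul, sub_eq_neg_add, ← neg_smul]
      congr 2
      field_simp
      linear_combination hc
    rw [this, smul_eq_zero_iff_right (inv_ne_zero hh), sub_eq_zero]
  have hsum (x y : V) : ∑ z, ψ (-polar Q z ((g 1 0)⁻¹ • x + (h 1 0)⁻¹ • y)) =
      if y = a • x then (Fintype.card V : ℂ) else 0 := by
    simp only [← hpole, ← neg_eq_zero (a := (g 1 0)⁻¹ • x + _), ← polar_neg_right,
      ← sum_addChar_polar_eq_ite hψ hQ, polar_comm Q]
  have hphase (x : V) : g 0 0 / g 1 0 * Q x + h 1 1 / h 1 0 * Q (a • x) =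
      a * (g * h) 0 1 * Q x := by
    have hdet := det_fin_two_eq_one h
    have hb : g 0 0 - h 1 1 * a = -((g * h) 0 1 * h 1 0) := by
      simp only [ha, coe_mul, Matrix.mul_apply, Fin.sum_univ_two]
      linear_combination -g 0 0 * hdet
    rw [QuadraticMap.map_smul, smul_eq_mul]
    field_simp
    linear_combination Q x * (h 1 1 * a - (g * h) 0 1 * h 1 0) * hc + Q x * h 1 0 * hb
  refine LinearMap.ext fun f ↦ funext fun x ↦ ?_
  rw [weilOperator_mul_apply_of_ne_zero hg hh, weilOperator_apply_of_eq_zero hgh, ← ha]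
  simp only [hgh, zero_div, zero_mul, zero_sub, hsum, mul_ite, mul_zero, ite_mul,
    Finset.sum_ite_eq', Finset.mem_univ, if_true, hphase, hγ]
  field_simp

lemma weilOperator_mul_of_mul_ne_zero (hγ₀ : quadraticGaussSum ψ Q ≠ 0)
    (hγ : ∀ e : F, e ≠ 0 → quadraticGaussSum ψ (e • Q) = quadraticGaussSum ψ Q)
    {g h : SL(2, F)} (hg : g 1 0 ≠ 0) (hh : h 1 0 ≠ 0) (hgh : (g * h) 1 0 ≠ 0) :
    weilOperator ψ Q (g * h) = weilOperator ψ Q g * weilOperator ψ Q h := by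
  have hphase (x y : V) : weilPhase Q (g * h) x y =
      g 0 0 / g 1 0 * Q x + h 1 1 / h 1 0 * Q y -
        Q ((g 1 0)⁻¹ • x + (h 1 0)⁻¹ • y) / ((g * h) 1 0 / (g 1 0 * h 1 0)) := by
    have hdg := det_fin_two_eq_one g
    have hdh := det_fin_two_eq_one h
    simp only [weilPhase, QuadraticMap.map_add Q, QuadraticMap.map_smul, polar_smul_left,
      polar_smul_right, smul_eq_mul]
    field_simp
    simp only [coe_mul, Matrix.mul_apply, Fin.sum_univ_two]
    linear_combination -h 1 0 ^ 2 * Q x * hdg - g 1 0 ^ 2 * Q y * hdh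
  have he : (g * h) 1 0 / (g 1 0 * h 1 0) ≠ 0 := div_ne_zero hgh (mul_ne_zero hg hh)
  refine LinearMap.ext fun f ↦ funext fun x ↦ ?_
  rw [weilOperator_mul_apply_of_ne_zero hg hh, weilOperator_apply_of_ne_zero hgh, Finset.mul_sum,
    Finset.mul_sum]
  refine Finset.sum_congr rfl fun y _ ↦ ?_
  rw [sum_addChar_sub_polar he, hγ _ he, hphase, sub_eq_add_neg, AddChar.map_add_eq_mul ψ (_ + _)]
  field_simp

/-- The Weil representation of `SL(2, F)` on the functions on a finite quadratic space whose Gauss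
sum is invariant under scaling of the form. -/
def weilRepresentation (hψ : ψ ≠ 1) (hQ : Q.polarBilin.SeparatingLeft)
    (hγ : ∀ e : F, e ≠ 0 → quadraticGaussSum ψ (e • Q) = quadraticGaussSum ψ Q) :
    Representation ℂ SL(2, F) (V → ℂ) where
  toFun := weilOperator ψ Q
  map_one' := weilOperator_one
  map_mul' g h := by
    have hsq := quadraticGaussSum_sq hψ hQ hγ
    have hγ₀ : quadraticGaussSum ψ Q ≠ 0 :=
      ne_zero_pow two_ne_zero (hsq ▸ Nat.cast_ne_zero.mpr Fintype.card_ne_zero)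
    by_cases hg : g 1 0 = 0
    · exact weilOperator_mul_of_left_eq_zero hg
    by_cases hh : h 1 0 = 0
    · exact weilOperator_mul_of_right_eq_zero hg hh
    by_cases hgh : (g * h) 1 0 = 0
    · exact weilOperator_mul_of_mul_eq_zero hψ hQ hsq hg hh hgh
    · exact weilOperator_mul_of_mul_ne_zero hγ₀ hγ hg hh hgh

lemma weilOperator_comp_isometryEquiv (g : SL(2, F)) (e : Q.IsometryEquiv Q) (f : V → ℂ) :
    weilOperator ψ Q g (f ∘ e) = weilOperator ψ Q g f ∘ e := by
  ext x
  by_cases hg : g 1 0 = 0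
  · simp [weilOperator_apply_of_eq_zero hg]
  · have hphase (y : V) : weilPhase Q g (e x) (e y) = weilPhase Q g x y := by
      simp only [weilPhase, polar, ← map_add, e.map_app]
    simp only [weilOperator_apply_of_ne_zero hg, Function.comp_apply]
    rw [← Equiv.sum_comp e.toEquiv (fun y ↦ ψ (weilPhase Q g (e x) y) * f y)]
    exact congr_arg _ (Finset.sum_congr rfl fun y _ ↦ by rw [← hphase]; rfl)

end WeilRepresentation

section NormForm

variable (R S : Type*) [CommRing R] [StrongRankCondition R] [CommRing S] [Algebra R S]
  [Algebra.IsQuadraticExtension R S]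

variable {R S} in
lemma norm_add_eq (x y : S) : Algebra.norm R (x + y) =
    Algebra.norm R x + Algebra.norm R y +
      (Algebra.trace R S x * Algebra.trace R S y - Algebra.trace R S (x * y)) := by
  have b : Basis (Fin 2) R S :=
    finBasisOfFinrankEq R S (Algebra.IsQuadraticExtension.finrank_eq_two R S)
  simp only [Algebra.norm_eq_matrix_det b, Algebra.trace_eq_matrix_trace b, map_add, map_mul,
    Matrix.det_fin_two, Matrix.trace_fin_two, Matrix.add_apply, Matrix.mul_apply,
    Fin.sum_univ_two]
  ring

/-- The norm of a quadratic extension as a quadratic form: the space carrying the Weil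
representation. -/
def normForm : QuadraticForm R S where
  toFun := Algebra.norm R
  toFun_smul a x := by
    rw [Algebra.smul_def, map_mul, Algebra.norm_algebraMap,
      Algebra.IsQuadraticExtension.finrank_eq_two, pow_two, smul_eq_mul]
  exists_companion' :=
    ⟨(LinearMap.mul R R).compl₁₂ (Algebra.trace R S) (Algebra.trace R S) - Algebra.traceForm R S,
      norm_add_eq⟩

variable {R S}

@[simp]
lemma normForm_apply (x : S) : normForm R S x = Algebra.norm R x := rfl

lemma polar_normForm (x y : S) : polar (normForm R S) x y =
    Algebra.trace R S x * Algebra.trace R S y - Algebra.trace R S (x * y) := by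
  simp only [polar, normForm_apply, norm_add_eq]
  ring

variable {F E : Type*} [Field F] [Field E] [Algebra F E] [Algebra.IsQuadraticExtension F E]

lemma separatingLeft_polarBilin_normForm [Algebra.IsSeparable F E] :
    (normForm F E).polarBilin.SeparatingLeft := by
  intro x hx
  have hx' : algebraMap F E (Algebra.trace F E x) = x := by
    refine sub_eq_zero.mp ((traceForm_nondegenerate F E).1 _ fun y ↦ ?_)
    rw [Algebra.traceForm_apply, sub_mul, map_sub, ← Algebra.smul_def, map_smul, smul_eq_mul,
      ← polar_normForm]
    exact hx y
  have htr := congr_arg (Algebra.trace F E) hx'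
  rw [Algebra.trace_algebraMap, Algebra.IsQuadraticExtension.finrank_eq_two, two_nsmul,
    add_eq_left] at htr
  rw [← hx', htr, map_zero]

end NormForm

lemma two_mul_norm_sum_mul_sq_le {G : Type*} [Group G] [Fintype G] {χ : G →* ℂ} (hχ : χ ^ 2 ≠ 1)
    {f : G → ℂ} (hinv : ∀ u, f u⁻¹ = f u) (hf : ∀ u, ‖f u‖ ≤ 1) :
    2 * ‖∑ u, χ u * f u‖ ^ 2 ≤ (Fintype.card G : ℝ) ^ 2 := by
  have hnorm (u : G) : ‖χ u‖ = 1 := (χ.isOfFinOrder (isOfFinOrder_of_finite u)).norm_eq_one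
  have hsymm : 2 * ∑ u, χ u * f u = ∑ u, (χ u + χ u⁻¹) * f u := by
    simp only [add_mul, Finset.sum_add_distrib, two_mul]
    congr 1
    rw [← Equiv.sum_comp (Equiv.inv G)]
    simp [hinv]
  have hsq (u : G) : ‖χ u + χ u⁻¹‖ ^ 2 = 2 + 2 * ((χ ^ 2) u).re := by
    have hconj : χ u⁻¹ = (starRingEnd ℂ) (χ u) := by simp [← Complex.inv_eq_conj (hnorm u)]
    have hone : (χ u).re ^ 2 + (χ u).im ^ 2 = 1 := by
      rw [pow_two, pow_two, ← Complex.normSq_apply, ← Complex.sq_norm, hnorm, one_pow]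
    rw [hconj, Complex.add_conj, Complex.norm_real, Real.norm_eq_abs, sq_abs,
      MonoidHom.pow_apply, pow_two (χ u), Complex.mul_re]
    linear_combination 2 * hone
  have hsum : ∑ u, ‖χ u + χ u⁻¹‖ ^ 2 = 2 * Fintype.card G := by
    have := sum_hom_units_eq_zero (χ ^ 2) hχ
    simp only [hsq, Finset.sum_add_distrib, ← Finset.mul_sum, ← Complex.re_sum, this]
    simp [mul_comm]
  have hle : 2 * ‖∑ u, χ u * f u‖ ≤ ∑ u, ‖χ u + χ u⁻¹‖ := by
    calc 2 * ‖∑ u, χ u * f u‖ = ‖∑ u, (χ u + χ u⁻¹) * f u‖ := by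
          simp only [← hsymm, norm_mul, Complex.norm_ofNat]
      _ ≤ ∑ u, ‖χ u + χ u⁻¹‖ := norm_sum_le_of_le _ fun u _ ↦ by
        simpa using mul_le_mul_of_nonneg_left (hf u) (norm_nonneg (χ u + χ u⁻¹))
  have hcs : (∑ u, ‖χ u + χ u⁻¹‖) ^ 2 ≤ _ :=
    sq_sum_le_card_mul_sum_sq (s := Finset.univ)
  rw [hsum, Finset.card_univ] at hcs
  nlinarith [norm_nonneg (∑ u, χ u * f u)]

section Isotypic

variable (F : Type*) {E : Type*} [Field F] [Field E] [Algebra F E]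

variable (E) in
/-- The group of units of norm one, which acts on `E` by isometries of the norm form. -/
def normOneUnits : Subgroup Eˣ := (Units.map (Algebra.norm F : E →* F)).ker

variable {F} in
lemma mem_normOneUnits {u : Eˣ} : u ∈ normOneUnits F E ↔ Algebra.norm F (u : E) = 1 := by
  simp [normOneUnits, Units.ext_iff]

/-- The functions on `E` on which the units of norm one act through `θ`. -/
def isotypicSubmodule (θ : MulChar E ℂ) : Submodule ℂ (E → ℂ) where
  carrier := {f | ∀ u ∈ normOneUnits F E, ∀ x, f (u * x) = θ u * f x}
  zero_mem' := by simp
  add_mem' hf hg u hu x := by simp [hf u hu, hg u hu, mul_add]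
  smul_mem' r f hf u hu x := by simp [hf u hu, mul_left_comm]

variable {F} {θ : MulChar E ℂ}

lemma mulChar_mem_isotypicSubmodule (θ : MulChar E ℂ) : ⇑θ ∈ isotypicSubmodule F θ :=
  fun u _ x ↦ map_mul θ (u : E) x

variable (F) in
open scoped Classical in
/-- The restriction of `θ` to the elements of norm one, extended by zero: the vector of the
`θ`-isotypic subspace on which lower-left entries `c ≠ 0` are detected. -/
def normOneExtension (θ : MulChar E ℂ) (x : E) : ℂ := if Algebra.norm F x = 1 then θ x else 0

lemma normOneExtension_of_norm_eq_one {x : E} (hx : Algebra.norm F x = 1) :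
    normOneExtension F θ x = θ x := if_pos hx

lemma normOneExtension_of_norm_ne_one {x : E} (hx : Algebra.norm F x ≠ 1) :
    normOneExtension F θ x = 0 := if_neg hx

lemma normOneExtension_mem_isotypicSubmodule (θ : MulChar E ℂ) :
    normOneExtension F θ ∈ isotypicSubmodule F θ := by
  intro u hu x
  have hN : Algebra.norm F (u * x) = Algebra.norm F x := by
    rw [map_mul, mem_normOneUnits.mp hu, one_mul]
  by_cases hx : Algebra.norm F x = 1
  · rw [normOneExtension_of_norm_eq_one hx, normOneExtension_of_norm_eq_one (hN.trans hx), map_mul]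
  · rw [normOneExtension_of_norm_ne_one hx, normOneExtension_of_norm_ne_one (hN ▸ hx), mul_zero]

variable (F) in
/-- The restriction of `θ` to the group of units of norm one, as a homomorphism to `ℂ`. -/
def normOneCharacter (θ : MulChar E ℂ) : normOneUnits F E →* ℂ :=
  (θ : E →* ℂ).comp ((Units.coeHom E).comp (normOneUnits F E).subtype)

lemma apply_zero_of_mem_isotypicSubmodule (hθ : ∃ u ∈ normOneUnits F E, θ u ≠ 1) {f : E → ℂ}
    (hf : f ∈ isotypicSubmodule F θ) : f 0 = 0 := by
  obtain ⟨u, hu, hu₁⟩ := hθ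
  have hf₀ : f 0 = θ u * f 0 := by simpa using hf u hu 0
  exact by_contra fun h ↦ hu₁ (mul_right_cancel₀ h (by rw [one_mul, ← hf₀]))

lemma eq_zero_of_mem_isotypicSubmodule (hθ : ∃ u ∈ normOneUnits F E, θ u ≠ 1) {s : Fˣ → Eˣ}
    (hs : Function.RightInverse s (Units.map (Algebra.norm F))) {f : E → ℂ}
    (hf : f ∈ isotypicSubmodule F θ) (hf₀ : ∀ t, f (s t) = 0) : f = 0 := by
  ext x
  obtain rfl | hx := eq_or_ne x 0
  · exact apply_zero_of_mem_isotypicSubmodule hθ hf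
  lift x to Eˣ using hx.isUnit
  set y := s (Units.map (Algebra.norm F) x) with hy
  have hmem : x * y⁻¹ ∈ normOneUnits F E := by
    rw [normOneUnits, MonoidHom.mem_ker, map_mul, map_inv, hy, hs, mul_inv_cancel]
  have hxy := hf _ hmem y
  rwa [← Units.val_mul, inv_mul_cancel_right, hf₀, mul_zero] at hxy

lemma exists_mem_isotypicSubmodule (θ : MulChar E ℂ) {s : Fˣ → Eˣ}
    (hs : Function.RightInverse s (Units.map (Algebra.norm F))) (φ : Fˣ → ℂ) :
    ∃ f ∈ isotypicSubmodule F θ, ∀ t, f (s t) = φ t := by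
  let N : Eˣ →* Fˣ := Units.map (Algebra.norm F)
  let f : E → ℂ := Function.extend Units.val (fun v ↦ θ (v * (s (N v))⁻¹ : Eˣ) * φ (N v)) 0
  have hf (v : Eˣ) : f v = θ (v * (s (N v))⁻¹ : Eˣ) * φ (N v) :=
    Units.val_injective.extend_apply _ _ v
  have hf₀ : f 0 = 0 := Function.extend_apply' _ _ _ (by simp)
  refine ⟨f, fun u hu x ↦ ?_, fun t ↦ ?_⟩
  · obtain rfl | hx := eq_or_ne x 0
    · rw [mul_zero, hf₀, mul_zero]
    lift x to Eˣ using hx.isUnit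
    have hN : N (u * x) = N x := by rw [map_mul, MonoidHom.mem_ker.mp hu, one_mul]
    rw [← Units.val_mul, hf, hf, hN, mul_assoc u, Units.val_mul u, map_mul, mul_assoc]
  · rw [hf, show N (s t) = t from hs t, mul_inv_cancel, Units.val_one, map_one, one_mul]

lemma finrank_isotypicSubmodule [Finite E] (hθ : ∃ u ∈ normOneUnits F E, θ u ≠ 1) :
    finrank ℂ (isotypicSubmodule F θ) = Nat.card F - 1 := by
  have : Finite F := Finite.of_injective _ (algebraMap F E).injective
  have := Fintype.ofFinite Fˣ
  have hN := FiniteField.unitsMap_norm_surjective F E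
  let s : Fˣ → Eˣ := Function.surjInv hN
  have hs : Function.RightInverse s _ := Function.rightInverse_surjInv hN
  let restrict : isotypicSubmodule F θ →ₗ[ℂ] Fˣ → ℂ :=
    LinearMap.funLeft ℂ ℂ (fun t ↦ (s t : E)) ∘ₗ (isotypicSubmodule F θ).subtype
  have hinj : Function.Injective restrict :=
    (injective_iff_map_eq_zero restrict).mpr fun f hf ↦
      Subtype.ext (eq_zero_of_mem_isotypicSubmodule hθ hs f.2 (congr_fun hf))
  have hsurj : Function.Surjective restrict := fun φ ↦
    let ⟨f, hf, hfφ⟩ := exists_mem_isotypicSubmodule θ hs φ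
    ⟨⟨f, hf⟩, funext hfφ⟩
  rw [(LinearEquiv.ofBijective restrict ⟨hinj, hsurj⟩).finrank_eq, finrank_fintype_fun_eq_card,
    ← Nat.card_eq_fintype_card, Nat.card_units]

end Isotypic

lemma addChar_eq_one_of_forall_ne_zero {A M : Type*} [AddGroup A] [Monoid M] (hA : 2 < Nat.card A)
    {ψ : AddChar A M} {κ : M} (hκ : ∀ t ≠ 0, ψ t = κ) : ψ = 1 := by
  ext t
  obtain ⟨s, hs⟩ : ∃ s, s ∉ ({0, -t} : Set A) := by
    by_contra! h
    have hcard := Set.ncard_insert_le (0 : A) {-t}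
    rw [Set.eq_univ_of_forall h, Set.ncard_univ, Set.ncard_singleton] at hcard
    lia
  obtain ⟨hs₀, hst⟩ : s ≠ 0 ∧ s ≠ -t := by simpa using hs
  have hmul : ψ s * ψ t = ψ s := by
    rw [← ψ.map_add_eq_mul, hκ s hs₀, hκ _ (mt eq_neg_of_add_eq_zero_left hst)]
  exact (ψ.val_isUnit s).mul_eq_left.mp hmul

section Cuspidal

variable {F E : Type*} [Field F] [Field E] [Algebra F E] [Algebra.IsQuadraticExtension F E]

lemma natCard_normOneUnits [Finite E] : Nat.card (normOneUnits F E) = Nat.card F + 1 := by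
  have hindex : (normOneUnits F E).index = Nat.card F - 1 := by
    rw [normOneUnits, Subgroup.index_ker,
      MonoidHom.range_eq_top.mpr (FiniteField.unitsMap_norm_surjective F E), Subgroup.card_top,
      Nat.card_units]
  have hE : Nat.card E = Nat.card F ^ 2 := by
    rw [Module.natCard_eq_pow_finrank (K := F), Algebra.IsQuadraticExtension.finrank_eq_two]
  have : Finite F := Finite.of_injective _ (algebraMap F E).injective
  have hF := Finite.one_lt_card (α := F)
  have hmul := (normOneUnits F E).card_mul_index
  rw [hindex, Nat.card_units, hE, ← one_pow 2, Nat.sq_sub_sq] at hmul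
  exact Nat.eq_of_mul_eq_mul_right (by lia) hmul

variable (F E) in
lemma exists_mem_normOneUnits_ne_one [Finite E] : ∃ u ∈ normOneUnits F E, u ≠ 1 := by
  have : Finite F := Finite.of_injective _ (algebraMap F E).injective
  refine (normOneUnits F E).bot_or_exists_ne_one.resolve_left ?_
  rw [← ne_eq, ← Subgroup.one_lt_card_iff_ne_bot, natCard_normOneUnits]
  exact Nat.lt_add_of_pos_left Nat.card_pos

lemma normOneCharacter_sq_ne_one [Finite E] (hF : 2 < Nat.card F) {θ : MulChar E ℂ}
    (hθ : ∀ x, θ x = 1 → x = 1) :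
    normOneCharacter F θ ^ 2 ≠ 1 := by
  intro hχ
  have hexp : Monoid.exponent (normOneUnits F E) ∣ 2 := by
    refine Monoid.exponent_dvd_of_forall_pow_eq_one fun u ↦ ?_
    have hu := hθ ((u : Eˣ) ^ 2 : E) ((map_pow θ _ 2).trans (DFunLike.congr_fun hχ u))
    ext
    simpa using hu
  rw [IsCyclic.exponent_eq_card, natCard_normOneUnits] at hexp
  have := Nat.le_of_dvd two_pos hexp
  lia

lemma polar_normForm_one_inv {u : E} (hu : Algebra.norm F u = 1) :
    polar (normForm F E) 1 u⁻¹ = polar (normForm F E) 1 u := by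
  have hu₀ : u ≠ 0 := by rintro rfl; simp at hu
  have hadd : Algebra.norm F (1 + u⁻¹) = Algebra.norm F (1 + u) := by
    rw [← one_mul (Algebra.norm F _), ← hu, ← map_mul, mul_add, mul_inv_cancel₀ hu₀, mul_one,
      add_comm]
  simp [polar, hadd, Algebra.norm_inv, hu]

variable [Fintype E] {ψ : AddChar F ℂ} {θ : MulChar E ℂ}

lemma quadraticGaussSum_smul_normForm (ψ : AddChar F ℂ) {e : F} (he : e ≠ 0) :
    quadraticGaussSum ψ (e • normForm F E) = quadraticGaussSum ψ (normForm F E) := by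
  obtain ⟨z, rfl⟩ := FiniteField.norm_surjective F E e
  have hz : z ≠ 0 := by rintro rfl; simp at he
  rw [quadraticGaussSum, quadraticGaussSum,
    ← Equiv.sum_comp (Equiv.mulLeft₀ z hz) fun v ↦ ψ (normForm F E v)]
  simp

lemma weilOperator_mem_isotypicSubmodule (g : SL(2, F)) {f : E → ℂ}
    (hf : f ∈ isotypicSubmodule F θ) :
    weilOperator ψ (normForm F E) g f ∈ isotypicSubmodule F θ := by
  intro u hu x
  let e : (normForm F E).IsometryEquiv (normForm F E) :=
    { DistribMulAction.toLinearEquiv F E u with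
      map_app' := fun y ↦ by simp [Units.smul_def, mem_normOneUnits.mp hu] }
  have he (y : E) : e y = u * y := rfl
  have hfe : f ∘ e = θ u • f := funext fun y ↦ hf u hu y
  rw [← he, ← Function.comp_apply (f := weilOperator ψ _ g f), ← weilOperator_comp_isometryEquiv,
    hfe, map_smul, Pi.smul_apply, smul_eq_mul]

/-- The part of the Weil representation of the norm form on which the units of norm one act through
`θ`; it is cuspidal when `θ` is nontrivial on these units. -/
def cuspidalRepresentation (hψ : ψ ≠ 1) (θ : MulChar E ℂ) :
    Representation ℂ SL(2, F) (isotypicSubmodule F θ) :=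
  (weilRepresentation hψ separatingLeft_polarBilin_normForm
    fun _ he ↦ quadraticGaussSum_smul_normForm ψ he).subrepresentation _
    fun g _ hf ↦ weilOperator_mem_isotypicSubmodule g hf

lemma eq_one_of_weilOperator_mulChar_eq (hF : 2 < Nat.card F) (hψ : ψ ≠ 1)
    (hθ : ∀ x, θ x = 1 → x = 1) {g : SL(2, F)} (hg : g 1 0 = 0)
    (hgθ : weilOperator ψ (normForm F E) g θ = θ) : g = 1 := by
  have hdet : g 0 0 * g 1 1 = 1 := by simpa [hg] using det_fin_two_eq_one g
  have ha : g 0 0 ≠ 0 := left_ne_zero_of_mul_eq_one hdet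
  have hθa (t : F) (ht : t ≠ 0) :
      ψ (g 0 0 * g 0 1 * t) * θ (algebraMap F E (g 0 0)) = 1 := by
    obtain ⟨x, rfl⟩ := FiniteField.norm_surjective F E t
    have hx : x ≠ 0 := by rintro rfl; simp at ht
    have hx' := congr_fun hgθ x
    rw [weilOperator_apply_of_eq_zero hg, Algebra.smul_def, map_mul θ, ← mul_assoc] at hx'
    exact mul_right_cancel₀ (hx.isUnit.map θ).ne_zero (hx'.trans (one_mul _).symm)
  have hb : g 0 1 = 0 := by
    by_contra hb
    refine hψ (addChar_eq_one_of_forall_ne_zero hF (κ := (θ (algebraMap F E (g 0 0)))⁻¹)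
      fun t ht ↦ eq_inv_of_mul_eq_one_left ?_)
    have hab := mul_ne_zero ha hb
    simpa [mul_div_cancel₀, hab] using hθa (t / (g 0 0 * g 0 1)) (div_ne_zero ht hab)
  have ha₁ : g 0 0 = 1 := by
    have := hθ _ (by simpa [hb] using hθa 1 one_ne_zero)
    simpa using this
  have hd₁ : g 1 1 = 1 := by simpa [ha₁] using hdet
  ext i j
  fin_cases i <;> fin_cases j <;> simp [ha₁, hb, hg, hd₁]

lemma weilOperator_normOneExtension_apply_one [Fintype (normOneUnits F E)] {g : SL(2, F)}
    (hg : g 1 0 ≠ 0) :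
    weilOperator ψ (normForm F E) g (normOneExtension F θ) 1 =
      (quadraticGaussSum ψ (normForm F E))⁻¹ *
        ∑ u, normOneCharacter F θ u * ψ (weilPhase (normForm F E) g 1 (u : Eˣ)) := by
  classical
  rw [weilOperator_apply_of_ne_zero hg]
  congr 1
  refine (Finset.sum_of_injOn (s := Finset.univ) (fun u : normOneUnits F E ↦ ((u : Eˣ) : E))
    ?_ ?_ ?_ ?_).symm
  · exact (Units.val_injective.comp Subtype.val_injective).injOn
  · simp [Set.MapsTo]
  · intro x _ hx
    rw [normOneExtension_of_norm_ne_one, mul_zero]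
    intro hx₁
    have hx₀ : x ≠ 0 := by rintro rfl; simp at hx₁
    exact hx ⟨⟨Units.mk0 x hx₀, mem_normOneUnits.mpr hx₁⟩, by simp⟩
  · intro u _
    rw [normOneExtension_of_norm_eq_one (mem_normOneUnits.mp u.2), mul_comm]
    rfl

lemma norm_quadraticGaussSum_normForm (hψ : ψ ≠ 1) :
    ‖quadraticGaussSum ψ (normForm F E)‖ = Nat.card F := by
  have : Finite F := Finite.of_injective _ (algebraMap F E).injective
  refine (pow_left_inj₀ (norm_nonneg _) (Nat.cast_nonneg _) two_ne_zero).mp ?_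
  rw [← norm_pow, quadraticGaussSum_sq hψ separatingLeft_polarBilin_normForm fun _ he ↦
      quadraticGaussSum_smul_normForm ψ he, Complex.norm_natCast, ← Nat.card_eq_fintype_card,
    natCard_eq_pow_finrank (K := F), Algebra.IsQuadraticExtension.finrank_eq_two, Nat.cast_pow]

lemma weilOperator_normOneExtension_ne (hF : 2 < Nat.card F) (hψ : ψ ≠ 1)
    (hθ : ∀ x, θ x = 1 → x = 1) {g : SL(2, F)} (hg : g 1 0 ≠ 0) :
    weilOperator ψ (normForm F E) g (normOneExtension F θ) ≠ normOneExtension F θ := by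
  intro h
  have : Finite F := Finite.of_injective _ (algebraMap F E).injective
  have := Fintype.ofFinite (normOneUnits F E)
  have hγ := norm_quadraticGaussSum_normForm (E := E) hψ
  have hγ₀ : quadraticGaussSum ψ (normForm F E) ≠ 0 :=
    norm_pos_iff.mp (hγ ▸ Nat.cast_pos.mpr (by lia))
  have hsum : ∑ u, normOneCharacter F θ u * ψ (weilPhase (normForm F E) g 1 (u : Eˣ)) =
      quadraticGaussSum ψ (normForm F E) := by
    have h₁ := congr_fun h 1
    rw [weilOperator_normOneExtension_apply_one hg, normOneExtension_of_norm_eq_one (map_one _),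
      map_one] at h₁
    exact ((inv_mul_eq_one₀ hγ₀).mp h₁).symm
  have hinv (u : normOneUnits F E) :
      ψ (weilPhase (normForm F E) g 1 ((u⁻¹ : normOneUnits F E) : Eˣ)) =
        ψ (weilPhase (normForm F E) g 1 (u : Eˣ)) := by
    have hu := mem_normOneUnits.mp u.2
    simp [weilPhase, polar_normForm_one_inv hu, Algebra.norm_inv, hu]
  have hle := two_mul_norm_sum_mul_sq_le (normOneCharacter_sq_ne_one hF hθ)
    (f := fun u ↦ ψ (weilPhase (normForm F E) g 1 (u : Eˣ))) hinv fun u ↦ (ψ.norm_apply _).le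
  rw [hsum, hγ, ← Nat.card_eq_fintype_card, natCard_normOneUnits] at hle
  norm_cast at hle
  nlinarith

lemma cuspidalRepresentation_injective (hF : 2 < Nat.card F) (hψ : ψ ≠ 1)
    (hθ : ∀ x, θ x = 1 → x = 1) :
    Function.Injective (cuspidalRepresentation hψ θ : Representation ℂ SL(2, F) _) := by
  refine (injective_iff_map_eq_one _).mpr fun g hg ↦ ?_
  have hfix {f : E → ℂ} (hf : f ∈ isotypicSubmodule F θ) :
      weilOperator ψ (normForm F E) g f = f :=
    congr_arg Subtype.val (LinearMap.congr_fun hg ⟨f, hf⟩)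
  by_cases hc : g 1 0 = 0
  · exact eq_one_of_weilOperator_mulChar_eq hF hψ hθ hc (hfix (mulChar_mem_isotypicSubmodule θ))
  · exact absurd (hfix (normOneExtension_mem_isotypicSubmodule θ))
      (weilOperator_normOneExtension_ne hF hψ hθ hc)

end Cuspidal

lemma exists_mulChar_eq_one_imp (E : Type*) [Field E] [Finite E] :
    ∃ θ : MulChar E ℂ, ∀ x, θ x = 1 → x = 1 := by
  have : NeZero (Nat.card Eˣ) := ⟨Nat.card_pos.ne'⟩
  let e : Eˣ ≃* rootsOfUnity (Nat.card Eˣ) ℂ :=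
    mulEquivOfCyclicCardEq (HasEnoughRootsOfUnity.natCard_rootsOfUnity ℂ _).symm
  refine ⟨MulChar.ofUnitHom ((rootsOfUnity _ ℂ).subtype.comp e.toMonoidHom), fun x hx ↦ ?_⟩
  have hx₀ : x ≠ 0 := by
    rintro rfl
    exact zero_ne_one ((MulChar.map_zero _).symm.trans hx)
  lift x to Eˣ using hx₀.isUnit
  rw [MulChar.ofUnitHom_coe] at hx
  simpa using hx

theorem sl2_f8_faithful_rep_dim7_general (F : Type*) [Field F] [Finite F] (hF : 2 < Nat.card F) :
    ∃ ρ : Representation ℂ SL(2, F) (Fin (Nat.card F - 1) → ℂ), Function.Injective ρ := by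
  obtain ⟨p, _⟩ := CharP.exists F
  have : Fact p.Prime := ⟨CharP.char_is_prime F p⟩
  let E := FiniteField.Extension F p 2
  have : Algebra.IsQuadraticExtension F E := ⟨FiniteField.finrank_extension F p 2⟩
  have := Fintype.ofFinite E
  obtain ⟨ψ, hψ⟩ : ∃ ψ : AddChar F ℂ, ψ 1 ≠ 1 := AddChar.exists_apply_ne_zero.mpr one_ne_zero
  have hψ₁ : ψ ≠ 1 := by rintro rfl; simp at hψ
  obtain ⟨θ, hθ⟩ := exists_mulChar_eq_one_imp E
  have hfinrank : finrank ℂ (isotypicSubmodule F θ) = finrank ℂ (Fin (Nat.card F - 1) → ℂ) := by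
    rw [finrank_fin_fun]
    obtain ⟨u, hu, hu₁⟩ := exists_mem_normOneUnits_ne_one F E
    exact finrank_isotypicSubmodule ⟨u, hu, fun h ↦ hu₁ (Units.ext (hθ u h))⟩
  let e := (LinearEquiv.ofFinrankEq _ _ hfinrank).conjRingEquiv
  exact ⟨(e : _ →* _).comp (cuspidalRepresentation hψ₁ θ),
    e.injective.comp (cuspidalRepresentation_injective hF hψ₁ hθ)⟩

/-- SL(2, F_8) admits a faithful complex linear representation of dimension 7. -/
theorem sl2_f8_faithful_rep_dim7 :
    ∃ ρ : Representation ℂ (Matrix.SpecialLinearGroup (Fin 2) (GaloisField 2 3))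
        (Fin 7 → ℂ),
      Function.Injective ρ := by
  have hcard : Nat.card (GaloisField 2 3) = 8 := GaloisField.card 2 3 three_ne_zero
  have hρ := sl2_f8_faithful_rep_dim7_general (GaloisField 2 3) (by lia)
  rwa [hcard] at hρ
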